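/- arXiv:2402.11529 — 2 statements merged into one kernel-verified Lean document; each statement's English description precedes it below -/
import Mathlib

section
/- Let m ≥ 2 and 0 ≤ a ≤ m−2 be integers. For every real q with 0 < q < 1, ((2m−1)/2)·q^{(m−a−1)²/(2m−1)}·L_m^{(a)}(q) = ((2m−1)/2)·Σ_{k=0}^{∞} χ_{2(2m−1)}^{(a)}(k)·q^{k²/(4(2m−1))}, where the powers of q are real powers. -/
open Finset

/-- The q-Pochhammer symbol `(x;q)_n = ∏_{j=0}^{n-1} (1 - x q^j)`. -/
noncomputable def qPoch (x q : ℂ) (n : ℕ) : ℂ := ∏ j ∈ Finset.range n, (1 - x * q ^ j)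

/-- The Gaussian binomial coefficient `[n choose k]_q`. -/
noncomputable def qBinom (q : ℂ) (n k : ℕ) : ℂ :=
  if k ≤ n then qPoch q q n / (qPoch q q (n - k) * qPoch q q k) else 0

/-- Extend a tuple `g : Fin k → ℕ` to `ℕ → ℕ` by zero. -/
def pad (k : ℕ) (g : Fin k → ℕ) : ℕ → ℕ := fun j => if h : j < k then g ⟨j, h⟩ else 0

/-- The general term of the multi-sum `L_m^{(a)}(q)`: here `n j` denotes `n_{j+1}`
(0-based indexing), so `n (m-2)` is `n_{m-1}` and `n 0` is `n_1`. -/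
noncomputable def Lterm (m a : ℕ) (q : ℂ) (n : ℕ → ℕ) : ℂ :=
  (-1) ^ (n (m - 2)) *
    q ^ (n (m - 2) * (n (m - 2) + 1) + (∑ j ∈ Finset.range (m - 2), 2 * (n j) ^ 2) +
        ∑ j ∈ Finset.Ico a (m - 2), 2 * n j) /
    qPoch (-q) (q ^ 2) (n 0 + if a = 0 then 1 else 0) *
    ∏ i ∈ Finset.range (m - 2), qBinom (q ^ 2) (n (i + 1) + if i + 1 = a then 1 else 0) (n i)

/-- The multi-sum `L_m^{(a)}(q)`. -/
noncomputable def L (m a : ℕ) (q : ℂ) : ℂ := ∑' n : Fin (m - 1) → ℕ, Lterm m a q (pad (m - 1) n)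

/-- The truncated multi-sum `V_{m,N}^{(a)}(q)`. -/
noncomputable def V (m a N : ℕ) (q : ℂ) : ℂ :=
  ∑ n ∈ Fintype.piFinset (fun _ : Fin (m - 1) => Finset.range N), Lterm m a q (pad (m - 1) n)

/-- The odd periodic function `χ_{2(2m-1)}^{(a)}`. -/
def chiL (m a : ℕ) (k : ℤ) : ℤ :=
  if k % (2 * (2 * m - 1)) = (2 * ((m : ℤ) - a - 1)) % (2 * (2 * m - 1)) then 1
  else if k % (2 * (2 * m - 1)) = (2 * ((m : ℤ) + a)) % (2 * (2 * m - 1)) then -1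
  else 0

/-!
For a bilateral sequence `A`, put `β_n = ∑_r A r / ((Q; Q)_{n-r} (Q; Q)_{n+r+c})` with `Q = q ^ 2`.
Bailey's lemma says that one further summation against a Gaussian binomial multiplies `A r` by
`Q ^ (r ^ 2 + c r)`. Starting from `1 / (-q; q ^ 2)_n`, which comes from `c = 0` and
`A r = (-1) ^ r q ^ (2 r ^ 2 + r)`, the first `a` summations only raise the coefficient of `r ^ 2`.
The symmetry `A (-r) = A r * Q ^ (-r)` then turns the shift `n + δ_{i,a}` into the passage from
`c = 0` to `c = 1`, and the remaining inner summations multiply by `Q ^ (r ^ 2 + r)`. A limiting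
`q`-Gauss sum evaluates the outermost one, giving
`L m a q = ∑_{r ∈ ℤ} ± q ^ ((2m-1) r ^ 2 + 2 (m-a-1) r)`. Completing the square, the exponent is
`k ^ 2 / (4 (2m-1)) - (m-a-1) ^ 2 / (2m-1)` for `k = |2 (2m-1) r + 2 (m-a-1)|`, and these `k` are
exactly the support of `χ` on `ℕ`, the sign of the term being `χ k`.
-/

lemma sum_eq_zero_of_involutive_neg {ι β : Type*} [AddCommGroup β] [IsAddTorsionFree β]
    {s : Finset ι} {f : ι → β} {σ : ι → ι} (hσ : Function.Involutive σ) (hs : ∀ i ∈ s, σ i ∈ s)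
    (hf : ∀ i ∈ s, f (σ i) = -f i) : ∑ i ∈ s, f i = 0 := by
  refine self_eq_neg.1 ?_
  rw [← sum_neg_distrib, ← sum_congr rfl hf]
  exact sum_nbij' σ σ hs hs (fun i _ => hσ i) (fun i _ => hσ i) fun i _ => by rw [hσ i]

lemma norm_zpow_le_one {K : Type*} [NormedDivisionRing K] {x : K} (hx : ‖x‖ ≤ 1) {n : ℤ}
    (hn : 0 ≤ n) : ‖x ^ n‖ ≤ 1 := by
  lift n to ℕ using hn
  rw [zpow_natCast, norm_pow]
  exact pow_le_one₀ (norm_nonneg x) hx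

lemma norm_sq_lt_one {K : Type*} [NormedDivisionRing K] {x : K} (hx : ‖x‖ < 1) : ‖x ^ 2‖ < 1 := by
  rw [norm_pow]
  exact pow_lt_one₀ (norm_nonneg x) hx two_ne_zero

lemma hasSum_sub_succ {M : Type*} [AddCommGroup M] [TopologicalSpace M] [IsTopologicalAddGroup M]
    {f : ℕ → M} (hf : Summable f) : HasSum (fun n => f n - f (n + 1)) (f 0) := by
  simpa using hf.hasSum.sub ((hasSum_nat_add_iff' 1).2 hf.hasSum)

lemma hasSum_of_hasSum_snoc {α M : Type*} [AddCommMonoid M] [TopologicalSpace M] [ContinuousAdd M]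
    [T3Space M] {k : ℕ} {f : (Fin (k + 1) → α) → M} {F : α → M} {S : M} (hf : Summable f)
    (hF : ∀ x, HasSum (fun g : Fin k → α => f (Fin.snoc g x)) (F x)) (hS : HasSum F S) :
    HasSum f S := by
  have h := ((Fin.snocEquiv fun _ => α).hasSum_iff.2 hf.hasSum).prod_fiberwise hF
  rw [hS.unique h]
  exact hf.hasSum

lemma summable_prod_apply {α : Type*} {f : α → ℝ} (hf : Summable f) (hf0 : ∀ x, 0 ≤ f x) (k : ℕ) :
    Summable fun g : Fin k → α => ∏ i, f (g i) := by
  induction k with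
  | zero => exact .of_finite
  | succ k ih =>
    rw [← (Fin.snocEquiv fun _ => α).summable_iff]
    refine (hf.mul_of_nonneg ih hf0 fun g => prod_nonneg fun i _ => hf0 (g i)).congr fun p => ?_
    simp [Fin.prod_univ_castSucc, mul_comm]

section qPoch

variable {x q Q : ℂ}

lemma qPoch_succ (x Q : ℂ) (n : ℕ) : qPoch x Q (n + 1) = qPoch x Q n * (1 - x * Q ^ n) :=
  Finset.prod_range_succ _ n

lemma qPoch_self_succ (Q : ℂ) (n : ℕ) : qPoch Q Q (n + 1) = qPoch Q Q n * (1 - Q ^ (n + 1)) := by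
  rw [qPoch_succ, pow_succ']

lemma one_sub_mul_pow_ne_zero (hx : ‖x‖ < 1) (hQ : ‖Q‖ ≤ 1) (n : ℕ) : 1 - x * Q ^ n ≠ 0 := by
  have hlt : ‖x * Q ^ n‖ < 1 := by
    rw [norm_mul, norm_pow]
    exact (mul_le_of_le_one_right (norm_nonneg x) (pow_le_one₀ (norm_nonneg Q) hQ)).trans_lt hx
  refine sub_ne_zero.2 fun h => hlt.ne ?_
  rw [← h, norm_one]

lemma qPoch_ne_zero (hx : ‖x‖ < 1) (hQ : ‖Q‖ ≤ 1) (n : ℕ) : qPoch x Q n ≠ 0 :=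
  Finset.prod_ne_zero_iff.2 fun j _ => one_sub_mul_pow_ne_zero hx hQ j

lemma exists_tendsto_qPoch (hx : ‖x‖ < 1) (hQ : ‖Q‖ < 1) :
    ∃ l ≠ 0, Filter.Tendsto (qPoch x Q) Filter.atTop (nhds l) := by
  have hsum : Summable fun n => ‖-(x * Q ^ n)‖ := by
    simpa only [norm_neg, norm_mul, norm_pow] using
      (summable_geometric_of_lt_one (norm_nonneg Q) hQ).mul_left ‖x‖
  refine ⟨∏' n, (1 + -(x * Q ^ n)), tprod_one_add_ne_zero_of_summable (fun n => ?_) hsum, ?_⟩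
  · simpa only [← sub_eq_add_neg] using one_sub_mul_pow_ne_zero hx hQ.le n
  · have h := (multipliable_one_add_of_summable hsum).tendsto_prod_tprod_nat
    simp only [← sub_eq_add_neg] at h ⊢
    exact h

lemma exists_norm_qPoch_le (hx : ‖x‖ < 1) (hQ : ‖Q‖ < 1) : ∃ C, ∀ n, ‖qPoch x Q n‖ ≤ C := by
  obtain ⟨l, -, hl⟩ := exists_tendsto_qPoch hx hQ
  simpa using (Metric.isBounded_range_of_tendsto _ hl).exists_norm_le

lemma exists_norm_inv_qPoch_le (hx : ‖x‖ < 1) (hQ : ‖Q‖ < 1) :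
    ∃ C, ∀ n, ‖(qPoch x Q n)⁻¹‖ ≤ C := by
  obtain ⟨l, hl0, hl⟩ := exists_tendsto_qPoch hx hQ
  simpa using (Metric.isBounded_range_of_tendsto _ (hl.inv₀ hl0)).exists_norm_le

end qPoch

section invQPoch

variable {Q : ℂ}

/-- The reciprocal `1 / (Q; Q)_k`, extended by zero to negative `k`. This extension makes
`invQPoch_sub_one` hold for every integer `k` and lets sums over `ℤ` cut themselves off. -/
noncomputable def invQPoch (Q : ℂ) : ℤ → ℂ
  | .ofNat n => (qPoch Q Q n)⁻¹
  | .negSucc _ => 0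

lemma invQPoch_natCast (Q : ℂ) (n : ℕ) : invQPoch Q n = (qPoch Q Q n)⁻¹ := rfl

lemma invQPoch_of_neg (Q : ℂ) {k : ℤ} (hk : k < 0) : invQPoch Q k = 0 := by
  obtain ⟨n, rfl⟩ := Int.eq_negSucc_of_lt_zero hk
  rfl

lemma invQPoch_sub_one (hQ : ∀ n, qPoch Q Q n ≠ 0) (k : ℤ) :
    invQPoch Q (k - 1) = (1 - Q ^ k) * invQPoch Q k := by
  rcases lt_trichotomy k 0 with hk | rfl | hk
  · rw [invQPoch_of_neg Q hk, invQPoch_of_neg Q (by lia), mul_zero]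
  · rw [invQPoch_of_neg Q (by lia), zpow_zero, sub_self, zero_mul]
  · obtain ⟨n, rfl⟩ : ∃ n : ℕ, k = (n + 1 : ℕ) := ⟨(k - 1).toNat, by lia⟩
    have hn := hQ (n + 1)
    rw [show ((n + 1 : ℕ) : ℤ) - 1 = n by push_cast; ring, invQPoch_natCast, invQPoch_natCast,
      zpow_natCast, eq_mul_inv_iff_mul_eq₀ hn, qPoch_self_succ, inv_mul_cancel_left₀ (hQ n)]

lemma exists_norm_invQPoch_le (hQ : ‖Q‖ < 1) : ∃ C, ∀ k, ‖invQPoch Q k‖ ≤ C := by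
  obtain ⟨C, hC⟩ := exists_norm_inv_qPoch_le hQ hQ
  refine ⟨C, fun k => ?_⟩
  cases k with
  | ofNat n => exact hC n
  | negSucc n => simpa [invQPoch] using (norm_nonneg _).trans (hC 0)

lemma qBinom_mul_qPoch (hQ : ∀ n, qPoch Q Q n ≠ 0) (n k : ℕ) :
    qBinom Q n k * qPoch Q Q k = qPoch Q Q n * invQPoch Q (n - k) := by
  rw [qBinom]
  split_ifs with h
  · rw [← Nat.cast_sub h, invQPoch_natCast]
    field_simp [hQ k]
  · rw [invQPoch_of_neg Q (by lia), zero_mul, mul_zero]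

end invQPoch

section Vandermonde

variable {Q : ℂ}

lemma sum_range_invQPoch_mul_step (hQ0 : Q ≠ 0) (hQ : ∀ n, qPoch Q Q n ≠ 0) (x : ℕ) (y : ℤ) :
    (1 - Q ^ (x + 1 : ℤ)) * ∑ t ∈ range (x + 2), Q ^ ((x + 1 - t) * (y - t) : ℤ) *
        (invQPoch Q t * invQPoch Q (x + 1 - t) * invQPoch Q (y - t)) =
      ∑ t ∈ range (x + 1), Q ^ ((x - t) * (y - t) : ℤ) *
        (invQPoch Q t * invQPoch Q (x - t) * invQPoch Q (y - t)) := by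
  let u (t : ℕ) : ℂ := Q ^ ((x + 1 - t) * (y - t) : ℤ) *
    (invQPoch Q t * invQPoch Q (x - t) * invQPoch Q (y - t))
  let v (t : ℕ) : ℂ := Q ^ ((x + 1 - t) * (y - t + 1) : ℤ) *
    (invQPoch Q (t - 1) * invQPoch Q (x + 1 - t) * invQPoch Q (y - t))
  -- `1 - Q ^ (x + 1) = (1 - Q ^ (x + 1 - t)) + Q ^ (x + 1 - t) * (1 - Q ^ t)`
  have split : ∀ t : ℕ, (1 - Q ^ (x + 1 : ℤ)) * (Q ^ ((x + 1 - t) * (y - t) : ℤ) *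
      (invQPoch Q t * invQPoch Q (x + 1 - t) * invQPoch Q (y - t))) = u t + v t := by
    intro t
    have hx : Q ^ (x + 1 : ℤ) = Q ^ (x + 1 - t : ℤ) * Q ^ (t : ℤ) := by
      rw [← zpow_add₀ hQ0, sub_add_cancel]
    have hv : Q ^ ((x + 1 - t) * (y - t + 1) : ℤ) =
        Q ^ ((x + 1 - t) * (y - t) : ℤ) * Q ^ (x + 1 - t : ℤ) := by
      rw [← zpow_add₀ hQ0, mul_add_one]
    have hu : invQPoch Q (x - t) = (1 - Q ^ (x + 1 - t : ℤ)) * invQPoch Q (x + 1 - t) := by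
      rw [← invQPoch_sub_one hQ, sub_right_comm, add_sub_cancel_right]
    simp only [u, v]
    rw [hx, hv, hu, invQPoch_sub_one hQ t]
    ring
  have merge : ∀ t : ℕ, u t + v (t + 1) = Q ^ ((x - t) * (y - t) : ℤ) *
      (invQPoch Q t * invQPoch Q (x - t) * invQPoch Q (y - t)) := by
    intro t
    have hu : Q ^ ((x + 1 - t) * (y - t) : ℤ) =
        Q ^ ((x - t) * (y - t) : ℤ) * Q ^ (y - t : ℤ) := by
      rw [← zpow_add₀ hQ0, ← add_one_mul, sub_add_eq_add_sub]
    have hy : invQPoch Q (y - (t + 1)) = (1 - Q ^ (y - t)) * invQPoch Q (y - t) := by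
      rw [← invQPoch_sub_one hQ, sub_sub]
    simp only [u, v, Nat.cast_add, Nat.cast_one, add_sub_add_right_eq_sub, add_sub_cancel_right]
    rw [hu, hy, sub_add_eq_sub_sub, sub_add_cancel]
    ring
  have u_last : u (x + 1) = 0 := by simp [u, invQPoch_of_neg]
  have v_zero : v 0 = 0 := by simp [v, invQPoch_of_neg]
  rw [mul_sum, sum_congr rfl fun t _ => split t, sum_add_distrib, sum_range_succ u, u_last,
    sum_range_succ' v, v_zero, add_zero, add_zero, ← sum_add_distrib,
    sum_congr rfl fun t _ => merge t]

lemma sum_range_succ_invQPoch_mul (hQ0 : Q ≠ 0) (hQ : ∀ n, qPoch Q Q n ≠ 0) (x : ℕ) (y : ℤ) :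
    ∑ t ∈ range (x + 1), Q ^ ((x - t) * (y - t) : ℤ) *
        (invQPoch Q t * invQPoch Q (x - t) * invQPoch Q (y - t)) =
      invQPoch Q x * invQPoch Q y := by
  induction x with
  | zero => simp [invQPoch, qPoch]
  | succ x ih =>
    have hx : invQPoch Q x = (1 - Q ^ (x + 1 : ℤ)) * invQPoch Q (x + 1) := by
      rw [← invQPoch_sub_one hQ, add_sub_cancel_right]
    have hne : 1 - Q ^ (x + 1 : ℤ) ≠ 0 := by
      refine left_ne_zero_of_mul (b := invQPoch Q (x + 1)) ?_
      rw [← hx, invQPoch_natCast]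
      exact inv_ne_zero (hQ x)
    refine mul_left_cancel₀ hne ?_
    push_cast
    rw [sum_range_invQPoch_mul_step hQ0 hQ, ih, hx, mul_assoc]

lemma sum_range_invQPoch_mul (hQ0 : Q ≠ 0) (hQ : ∀ n, qPoch Q Q n ≠ 0) {x y : ℤ} {N : ℕ}
    (hN : min x y < N) :
    ∑ t ∈ range N, Q ^ ((x - t) * (y - t)) *
        (invQPoch Q t * invQPoch Q (x - t) * invQPoch Q (y - t)) =
      invQPoch Q x * invQPoch Q y := by
  wlog hxy : x ≤ y generalizing x y
  · rw [mul_comm (invQPoch Q x), ← this (min_comm x y ▸ hN) (le_of_not_ge hxy)]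
    exact sum_congr rfl fun t _ => by rw [mul_comm (x - _), mul_right_comm]
  rw [min_eq_left hxy] at hN
  rcases lt_or_ge x 0 with hx | hx
  · rw [invQPoch_of_neg Q hx, zero_mul]
    exact sum_eq_zero fun t _ => by simp [invQPoch_of_neg Q (show x - t < 0 by lia)]
  · lift x to ℕ using hx
    rw [← sum_range_succ_invQPoch_mul hQ0 hQ]
    refine (sum_subset (range_subset_range.2 (by lia)) fun t _ ht => ?_).symm
    simp [invQPoch_of_neg Q (show (x : ℤ) - t < 0 by simp at ht; lia)]

end Vandermonde

section BaileySum

variable {Q : ℂ}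

/-- `(Q; Q)_n * β_n`, where `(α, β)` is the Bailey pair relative to `Q ^ c` whose `α` is the
symmetrisation of the bilateral sequence `A`, that is `α_r = A r + A (-c - r)` (only `A 0` if
`c = r = 0`). The factor `1 / (Q ^ (c + 1); Q)_(n + r)` of the usual definition is replaced by
`1 / (Q; Q)_(n + r + c)`. -/
noncomputable def baileySum (Q : ℂ) (c : ℕ) (A : ℤ → ℂ) (n : ℕ) : ℂ :=
  qPoch Q Q n * ∑ r ∈ Icc (-(n + c) : ℤ) n, A r * (invQPoch Q (n - r) * invQPoch Q (n + r + c))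

lemma invQPoch_mul_eq_zero (Q : ℂ) {c n : ℕ} {r : ℤ} (hr : r ∉ Icc (-(n + c) : ℤ) n) :
    invQPoch Q (n - r) * invQPoch Q (n + r + c) = 0 := by
  rcases not_and_or.1 (mt mem_Icc.2 hr) with h | h
  · rw [invQPoch_of_neg Q (show (n : ℤ) + r + c < 0 by lia), mul_zero]
  · rw [invQPoch_of_neg Q (show (n : ℤ) - r < 0 by lia), zero_mul]

lemma sum_Icc_invQPoch_eq_of_subset (Q : ℂ) (c n : ℕ) (A : ℤ → ℂ) {s : Finset ℤ}
    (hs : Icc (-(n + c) : ℤ) n ⊆ s) :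
    ∑ r ∈ Icc (-(n + c) : ℤ) n, A r * (invQPoch Q (n - r) * invQPoch Q (n + r + c)) =
      ∑ r ∈ s, A r * (invQPoch Q (n - r) * invQPoch Q (n + r + c)) :=
  sum_subset hs fun r _ hr => by rw [invQPoch_mul_eq_zero Q hr, mul_zero]

lemma sum_range_pow_mul_invQPoch (hQ0 : Q ≠ 0) (hQ : ∀ n, qPoch Q Q n ≠ 0) {c : ℕ} (hc : c ≤ 1)
    (n : ℕ) (r : ℤ) :
    ∑ s ∈ range (n + 1), Q ^ (s ^ 2 + c * s) *
        (invQPoch Q (n - s) * invQPoch Q (s - r) * invQPoch Q (s + r + c)) =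
      Q ^ (r ^ 2 + c * r) * (invQPoch Q (n - r) * invQPoch Q (n + r + c)) := by
  rw [← sum_range_invQPoch_mul hQ0 hQ (N := n + 1) (by lia), mul_sum, ← sum_range_reflect]
  refine sum_congr rfl fun t ht => ?_
  have htn : t ≤ n := Nat.lt_succ_iff.1 (mem_range.1 ht)
  have hexp : ((n - t : ℕ) : ℤ) ^ 2 + c * (n - t : ℕ) =
      r ^ 2 + c * r + (n - r - t) * (n + r + c - t) := by
    push_cast [htn]
    ring
  rw [Nat.add_sub_cancel, ← zpow_natCast Q, ← mul_assoc (Q ^ (r ^ 2 + c * r)), ← zpow_add₀ hQ0,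
    ← hexp, Nat.cast_sub htn]
  push_cast [htn]
  ring_nf

/-- **Bailey's lemma** with both parameters sent to infinity. -/
theorem sum_qBinom_mul_baileySum (hQ0 : Q ≠ 0) (hQ : ∀ n, qPoch Q Q n ≠ 0) {c : ℕ} (hc : c ≤ 1)
    (A : ℤ → ℂ) (n : ℕ) :
    ∑ s ∈ range (n + 1), Q ^ (s ^ 2 + c * s) * qBinom Q n s * baileySum Q c A s =
      baileySum Q c (fun r => Q ^ (r ^ 2 + c * r) * A r) n := by
  have expand : ∀ s ∈ range (n + 1), Q ^ (s ^ 2 + c * s) * qBinom Q n s * baileySum Q c A s =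
      ∑ r ∈ Icc (-(n + c) : ℤ) n, qPoch Q Q n * A r * (Q ^ (s ^ 2 + c * s) *
        (invQPoch Q (n - s) * invQPoch Q (s - r) * invQPoch Q (s + r + c))) := by
    intro s hs
    have hsn := mem_range.1 hs
    rw [baileySum, sum_Icc_invQPoch_eq_of_subset Q c s A
      (Icc_subset_Icc (by lia) (by lia) : _ ⊆ Icc (-(n + c) : ℤ) n), mul_assoc,
      ← mul_assoc (qBinom Q n s), qBinom_mul_qPoch hQ, mul_sum, mul_sum]
    exact sum_congr rfl fun r _ => by ring
  rw [sum_congr rfl expand, sum_comm, baileySum, mul_sum]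
  refine sum_congr rfl fun r _ => ?_
  rw [← mul_sum, sum_range_pow_mul_invQPoch hQ0 hQ hc]
  ring

lemma baileySum_zero_succ (hQ0 : Q ≠ 0) (hQ : ∀ n, qPoch Q Q n ≠ 0) {A : ℤ → ℂ}
    (hA : ∀ r, A (-r) = A r * Q ^ (-r)) (n : ℕ) :
    baileySum Q 0 A (n + 1) = baileySum Q 1 A n := by
  let f (r : ℤ) : ℂ := A r * (Q ^ (-r) - 1) * (invQPoch Q (n + 1 - r) * invQPoch Q (n + 1 + r))
  have odd : ∑ r ∈ Icc (-(n + 1) : ℤ) (n + 1), f r = 0 := by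
    refine sum_eq_zero_of_involutive_neg neg_involutive (fun r hr => ?_) fun r _ => ?_
    · rw [mem_Icc] at hr ⊢
      lia
    · simp only [f, hA, neg_neg, sub_neg_eq_add, ← sub_eq_add_neg]
      have h := zpow_ne_zero r hQ0
      rw [zpow_neg]
      field_simp
      ring
  rw [baileySum, baileySum, sum_Icc_invQPoch_eq_of_subset Q 1 n A
    (Icc_subset_Icc (by lia) (by lia) : _ ⊆ Icc (-(n + 1) : ℤ) (n + 1)), qPoch_self_succ,
    mul_assoc]
  congr 1
  rw [← sub_eq_zero, mul_sum]
  push_cast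
  rw [add_zero, ← sum_sub_distrib, ← mul_zero (Q ^ (n + 1 : ℤ)), ← odd, mul_sum]
  refine sum_congr rfl fun r _ => ?_
  have h1 : invQPoch Q (n - r) = (1 - Q ^ (n + 1 - r : ℤ)) * invQPoch Q (n + 1 - r) := by
    rw [← invQPoch_sub_one hQ, sub_right_comm, add_sub_cancel_right]
  have h2 : Q ^ (n + 1 - r : ℤ) = Q ^ (n + 1 : ℤ) * Q ^ (-r) := by
    rw [← zpow_add₀ hQ0, sub_eq_add_neg]
  simp only [f]
  rw [h1, h2, add_zero, add_right_comm (n : ℤ) r, show Q ^ (n + 1) = Q ^ (n + 1 : ℤ) by norm_cast]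
  ring

end BaileySum

section ThetaTerm

variable {q : ℂ}

/-- The bilateral sequence `(-1) ^ r * q ^ (2 * (i + 1) * r ^ 2 + r)`. Its Bailey sums in base
`q ^ 2` are the partial sums of the multi-sum over the first `i` summation variables. -/
noncomputable def thetaTerm (q : ℂ) (i : ℕ) (r : ℤ) : ℂ :=
  (-1) ^ r * q ^ (2 * (i + 1) * r ^ 2 + r)

lemma thetaTerm_succ (hq0 : q ≠ 0) (i : ℕ) (r : ℤ) :
    thetaTerm q (i + 1) r = (q ^ 2) ^ (r ^ 2) * thetaTerm q i r := by
  rw [thetaTerm, thetaTerm, ← zpow_natCast q 2, ← zpow_mul, mul_left_comm, ← zpow_add₀ hq0]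
  push_cast
  ring_nf

lemma thetaTerm_neg (hq0 : q ≠ 0) (i : ℕ) (r : ℤ) :
    thetaTerm q i (-r) = thetaTerm q i r * (q ^ 2) ^ (-r) := by
  rw [thetaTerm, thetaTerm, ← zpow_natCast q 2, ← zpow_mul, mul_assoc ((-1) ^ r),
    ← zpow_add₀ hq0, zpow_neg (-1), ← inv_zpow, inv_neg_one]
  push_cast
  ring_nf

lemma thetaTerm_zero_neg_one_sub (hq0 : q ≠ 0) (r : ℤ) :
    thetaTerm q 0 (-1 - r) = -(thetaTerm q 0 r * q ^ (2 * r + 1)) := by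
  rw [thetaTerm, thetaTerm, mul_assoc ((-1) ^ r), ← zpow_add₀ hq0,
    zpow_sub₀ (neg_ne_zero.2 one_ne_zero), div_eq_mul_inv, ← inv_zpow, zpow_neg_one, inv_neg_one]
  push_cast
  ring_nf

lemma baileySum_zero_thetaTerm_zero (hq0 : q ≠ 0)
    (hQ : ∀ n, qPoch (q ^ 2) (q ^ 2) n ≠ 0) (n : ℕ) :
    baileySum (q ^ 2) 0 (thetaTerm q 0) n =
      (1 - -q * (q ^ 2) ^ n) * baileySum (q ^ 2) 1 (thetaTerm q 0) n := by
  let f (r : ℤ) : ℂ := thetaTerm q 0 r * (1 + q ^ (2 * r + 1)) *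
    (invQPoch (q ^ 2) (n - r) * invQPoch (q ^ 2) (n + 1 + r))
  have odd : ∑ r ∈ Icc (-(n + 1) : ℤ) n, f r = 0 := by
    refine sum_eq_zero_of_involutive_neg (σ := fun r => -1 - r) (fun r => by ring)
      (fun r hr => ?_) fun r _ => ?_
    · rw [mem_Icc] at hr ⊢
      lia
    · have hinv : q ^ (2 * (-1 - r) + 1) * q ^ (2 * r + 1) = 1 := by
        rw [← zpow_add₀ hq0, show 2 * (-1 - r) + 1 + (2 * r + 1) = 0 by ring, zpow_zero]
      simp only [f]
      rw [thetaTerm_zero_neg_one_sub hq0, show (n : ℤ) - (-1 - r) = n + 1 + r by ring,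
        show (n : ℤ) + 1 + (-1 - r) = n - r by ring]
      linear_combination (-thetaTerm q 0 r *
        (invQPoch (q ^ 2) (n - r) * invQPoch (q ^ 2) (n + 1 + r))) * hinv
  rw [baileySum, baileySum, sum_Icc_invQPoch_eq_of_subset (q ^ 2) 0 n _
    (Icc_subset_Icc (by lia) (by lia) : _ ⊆ Icc (-(n + 1) : ℤ) n), mul_left_comm]
  congr 1
  rw [← sub_eq_zero, mul_sum]
  push_cast
  rw [← sum_sub_distrib, ← mul_zero (-(q ^ (2 * n + 1 : ℤ))), ← odd, mul_sum]
  refine sum_congr rfl fun r _ => ?_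
  have hshift : invQPoch (q ^ 2) (n + r) =
      (1 - (q ^ 2) ^ (n + 1 + r : ℤ)) * invQPoch (q ^ 2) (n + 1 + r) := by
    rw [← invQPoch_sub_one hQ, add_sub_right_comm, add_sub_cancel_right]
  have hpow : (q ^ 2) ^ (n + 1 + r : ℤ) = q ^ (2 * n + 1 : ℤ) * q ^ (2 * r + 1) := by
    rw [← zpow_natCast q 2, ← zpow_mul, ← zpow_add₀ hq0]
    push_cast
    ring_nf
  have hodd : q * (q ^ 2) ^ n = q ^ (2 * n + 1 : ℤ) := by
    rw [← pow_mul, ← pow_succ']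
    norm_cast
  simp only [f]
  rw [neg_mul, hodd, add_zero, hshift, hpow, add_right_comm (n : ℤ) r]
  ring

lemma baileySum_zero_thetaTerm_zero_eq_inv (hq0 : q ≠ 0) (hQ : ∀ n, qPoch (q ^ 2) (q ^ 2) n ≠ 0)
    (hN : ∀ n, qPoch (-q) (q ^ 2) n ≠ 0) (n : ℕ) :
    baileySum (q ^ 2) 0 (thetaTerm q 0) n = (qPoch (-q) (q ^ 2) n)⁻¹ := by
  induction n with
  | zero => simp [baileySum, thetaTerm, qPoch, invQPoch]
  | succ n ih =>
    have hfac : 1 - -q * (q ^ 2) ^ n ≠ 0 := right_ne_zero_of_mul (qPoch_succ (-q) _ n ▸ hN (n + 1))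
    rw [baileySum_zero_succ (pow_ne_zero 2 hq0) hQ (thetaTerm_neg hq0 0), qPoch_succ, mul_inv,
      ← ih, baileySum_zero_thetaTerm_zero hq0 hQ, mul_right_comm, mul_inv_cancel₀ hfac, one_mul]

end ThetaTerm

section ChainSum

variable {q : ℂ}

/-- The factor of the multi-sum linking two neighbouring summation variables `n_{i+1} = s` and
`n_{i+2} = x`. -/
noncomputable def chainWeight (q : ℂ) (a i s x : ℕ) : ℂ :=
  (q ^ 2) ^ (s ^ 2 + (if a ≤ i then 1 else 0) * s) *
    qBinom (q ^ 2) (x + if i + 1 = a then 1 else 0) s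

/-- The part of the multi-sum in the first `i` summation variables, as a function of the value `x`
of the next one. -/
noncomputable def chainSum (q : ℂ) (a : ℕ) : ℕ → ℕ → ℂ
  | 0, x => (qPoch (-q) (q ^ 2) (x + if a = 0 then 1 else 0))⁻¹
  | i + 1, x => ∑ s ∈ range ((x + if i + 1 = a then 1 else 0) + 1),
      chainWeight q a i s x * chainSum q a i s

lemma chainSum_succ_eq_baileySum (hq0 : q ≠ 0) (hQ : ∀ n, qPoch (q ^ 2) (q ^ 2) n ≠ 0)
    {a i c : ℕ} (hc : c = if a ≤ i then 1 else 0) {A : ℤ → ℂ}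
    (hA : ∀ s, chainSum q a i s = baileySum (q ^ 2) c A s) (x : ℕ) :
    chainSum q a (i + 1) x = baileySum (q ^ 2) c (fun r => (q ^ 2) ^ (r ^ 2 + c * r) * A r)
      (x + if i + 1 = a then 1 else 0) := by
  have hc1 : c ≤ 1 := by split_ifs at hc <;> lia
  simp only [chainSum, chainWeight, ← hc, hA]
  exact sum_qBinom_mul_baileySum (pow_ne_zero 2 hq0) hQ hc1 A _

lemma chainSum_of_lt (hq0 : q ≠ 0) (hQ : ∀ n, qPoch (q ^ 2) (q ^ 2) n ≠ 0)
    (hN : ∀ n, qPoch (-q) (q ^ 2) n ≠ 0) {a i : ℕ} (hi : i < a) (x : ℕ) :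
    chainSum q a i x = baileySum (q ^ 2) 0 (thetaTerm q i) x := by
  induction i generalizing x with
  | zero => simp [chainSum, baileySum_zero_thetaTerm_zero_eq_inv hq0 hQ hN, hi.ne']
  | succ i ih =>
    rw [chainSum_succ_eq_baileySum hq0 hQ (if_neg (by lia)).symm (ih (by lia)), if_neg hi.ne]
    simp [← thetaTerm_succ hq0]

lemma chainSum_self (hq0 : q ≠ 0) (hQ : ∀ n, qPoch (q ^ 2) (q ^ 2) n ≠ 0)
    (hN : ∀ n, qPoch (-q) (q ^ 2) n ≠ 0) (a x : ℕ) :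
    chainSum q a a x = baileySum (q ^ 2) 1 (thetaTerm q a) x := by
  rw [← baileySum_zero_succ (pow_ne_zero 2 hq0) hQ (thetaTerm_neg hq0 a)]
  cases a with
  | zero => simp [chainSum, baileySum_zero_thetaTerm_zero_eq_inv hq0 hQ hN]
  | succ a =>
    rw [chainSum_succ_eq_baileySum hq0 hQ (if_neg (by lia)).symm
      (chainSum_of_lt hq0 hQ hN a.lt_succ_self), if_pos rfl]
    simp [← thetaTerm_succ hq0]

lemma chainSum_add (hq0 : q ≠ 0) (hQ : ∀ n, qPoch (q ^ 2) (q ^ 2) n ≠ 0)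
    (hN : ∀ n, qPoch (-q) (q ^ 2) n ≠ 0) (a j x : ℕ) :
    chainSum q a (a + j) x =
      baileySum (q ^ 2) 1 (fun r => (q ^ 2) ^ (j * (r ^ 2 + r)) * thetaTerm q a r) x := by
  induction j generalizing x with
  | zero => simpa using chainSum_self hq0 hQ hN a x
  | succ j ih =>
    rw [← add_assoc, chainSum_succ_eq_baileySum hq0 hQ (if_pos (by lia)).symm ih,
      if_neg (by lia), add_zero]
    congr 1
    ext r
    rw [← mul_assoc, ← zpow_add₀ (pow_ne_zero 2 hq0)]
    push_cast
    ring_nf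

end ChainSum

section Gauss

variable {q : ℂ}

lemma norm_pow_mul_succ_le (hq : ‖q‖ ≤ 1) (n k : ℕ) :
    ‖(-1) ^ n * q ^ (n * (n + 1) + k)‖ ≤ ‖q‖ ^ n := by
  rw [norm_mul, norm_pow, norm_neg, norm_one, one_pow, one_mul, norm_pow]
  exact pow_le_pow_of_le_one (norm_nonneg q) hq (by nlinarith)

/-- The `q`-Gauss sum with numerator parameters `Q ^ (r + 1)` and `b → ∞`, where `Q = q ^ 2`. -/
theorem hasSum_qGauss (hq : ‖q‖ < 1) (r k : ℕ) :
    HasSum (fun j : ℕ => (-1) ^ j * q ^ (j * (j + 1) + 2 * k * j) * qPoch (q ^ 2) (q ^ 2) (r + j) /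
        (qPoch (q ^ 2) (q ^ 2) j * qPoch (q ^ 2) (q ^ 2) (r + k + 1 + j)))
      (qPoch (q ^ 2) (q ^ 2) r / qPoch (q ^ 2) (q ^ 2) k) := by
  have hQ := norm_sq_lt_one hq
  have hP : ∀ n, qPoch (q ^ 2) (q ^ 2) n ≠ 0 := qPoch_ne_zero hQ hQ.le
  have hfac : ∀ n, 1 - (q ^ 2) ^ (n + 1) ≠ 0 := fun n =>
    right_ne_zero_of_mul (qPoch_self_succ _ n ▸ hP (n + 1))
  induction r generalizing k with
  | zero =>
    let f (j : ℕ) : ℂ :=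
      (-1) ^ j * q ^ (j * (j + 1) + 2 * k * j) * (qPoch (q ^ 2) (q ^ 2) (k + j))⁻¹
    have summable_f : Summable f := by
      obtain ⟨C, hC⟩ := exists_norm_inv_qPoch_le hQ hQ
      refine .of_norm_bounded ((summable_geometric_of_lt_one (norm_nonneg q) hq).mul_right C)
        fun j => ?_
      rw [norm_mul]
      exact mul_le_mul (norm_pow_mul_succ_le hq.le j _) (hC _) (norm_nonneg _) (by positivity)
    have hval : qPoch (q ^ 2) (q ^ 2) 0 / qPoch (q ^ 2) (q ^ 2) k = f 0 := by simp [f, qPoch]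
    rw [hval]
    refine (hasSum_sub_succ summable_f).congr_fun fun j => ?_
    simp only [f]
    rw [show 0 + k + 1 + j = k + j + 1 by ring, ← add_assoc k, zero_add, qPoch_self_succ _ (k + j)]
    field_simp [hP j, hP (k + j), hfac (k + j)]
    ring
  | succ r ih =>
    have hval : qPoch (q ^ 2) (q ^ 2) (r + 1) / qPoch (q ^ 2) (q ^ 2) k =
        qPoch (q ^ 2) (q ^ 2) r / qPoch (q ^ 2) (q ^ 2) k - (q ^ 2) ^ (r + 1) *
          (1 - (q ^ 2) ^ (k + 1)) * (qPoch (q ^ 2) (q ^ 2) r / qPoch (q ^ 2) (q ^ 2) (k + 1)) := by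
      rw [qPoch_self_succ _ r, qPoch_self_succ _ k]
      field_simp [hP k, hfac k]
    rw [hval]
    refine ((ih k).sub ((ih (k + 1)).mul_left _)).congr_fun fun j => ?_
    rw [add_right_comm r 1 j, show r + 1 + k + 1 + j = r + k + 1 + j + 1 by ring,
      show r + (k + 1) + 1 + j = r + k + 1 + j + 1 by ring, qPoch_self_succ _ (r + j),
      qPoch_self_succ _ (r + k + 1 + j)]
    field_simp [hP j, hP (r + k + 1 + j), hfac (r + k + 1 + j)]
    ring

lemma hasSum_pow_mul_invQPoch (hq : ‖q‖ < 1) (r : ℤ) :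
    HasSum (fun N : ℕ => (-1) ^ N * q ^ (N * (N + 1)) * (qPoch (q ^ 2) (q ^ 2) N *
        (invQPoch (q ^ 2) (N - r) * invQPoch (q ^ 2) (N + r + 1))))
      ((2 * r + 1).sign * ((-1) ^ r * q ^ (r ^ 2 + r))) := by
  wlog hr : 0 ≤ r generalizing r
  · convert this (-1 - r) (by lia) using 1
    · ext N
      rw [mul_comm (invQPoch _ _), show (N : ℤ) - (-1 - r) = N + r + 1 by ring,
        show (N : ℤ) + (-1 - r) + 1 = N - r by ring]
    · rw [show 2 * (-1 - r) + 1 = -(2 * r + 1) by ring, Int.sign_neg,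
        show (-1 - r) ^ 2 + (-1 - r) = r ^ 2 + r by ring,
        zpow_sub₀ (neg_ne_zero.2 one_ne_zero), div_eq_mul_inv, ← inv_zpow, inv_neg_one]
      push_cast
      ring
  lift r to ℕ using hr
  have hQ := norm_sq_lt_one hq
  have hP : ∀ n, qPoch (q ^ 2) (q ^ 2) n ≠ 0 := qPoch_ne_zero hQ hQ.le
  rw [← (add_right_injective r).hasSum_iff fun N hN => ?_]
  · have hval : ((2 * r + 1 : ℤ).sign : ℂ) * ((-1) ^ (r : ℤ) * q ^ ((r : ℤ) ^ 2 + r)) =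
        (-1) ^ r * q ^ (r * (r + 1)) *
          (qPoch (q ^ 2) (q ^ 2) r / qPoch (q ^ 2) (q ^ 2) r) := by
      rw [div_self (hP r), mul_one, Int.sign_eq_one_of_pos (by lia), Int.cast_one, one_mul, sq,
        ← mul_add_one]
      norm_cast
    rw [hval]
    refine ((hasSum_qGauss hq r r).mul_left _).congr_fun fun j => ?_
    rw [Function.comp_apply, Nat.cast_add, add_sub_cancel_left, invQPoch_natCast,
      show (r : ℤ) + j + r + 1 = (r + r + 1 + j : ℕ) by push_cast; ring, invQPoch_natCast]
    field_simp [hP j, hP (r + r + 1 + j)]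
    ring
  · have hNr : N < r := not_le.1 fun h => hN ⟨N - r, Nat.add_sub_cancel' h⟩
    rw [invQPoch_of_neg _ (by lia), zero_mul, mul_zero, mul_zero]

lemma summable_pow_mul_invQPoch (hq0 : q ≠ 0) (hq : ‖q‖ < 1) :
    Summable fun p : ℕ × ℤ => (-1) ^ p.1 * q ^ (p.1 * (p.1 + 1)) * (qPoch (q ^ 2) (q ^ 2) p.1 *
      (invQPoch (q ^ 2) (p.1 - p.2) * invQPoch (q ^ 2) (p.1 + p.2 + 1))) := by
  have hQ := norm_sq_lt_one hq
  obtain ⟨B, hB⟩ := exists_norm_qPoch_le hQ hQ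
  obtain ⟨C, hC⟩ := exists_norm_invQPoch_le hQ
  have hB0 : 0 ≤ B := (norm_nonneg _).trans (hB 0)
  have hC0 : 0 ≤ C := (norm_nonneg _).trans (hC 0)
  have geom := summable_geometric_of_lt_one (norm_nonneg q) hq
  have geom_int : Summable fun r : ℤ => ‖q‖ ^ r.natAbs :=
    summable_int_iff_summable_nat_and_neg.2 ⟨by simpa using geom, by simpa using geom⟩
  refine .of_norm_bounded ((geom.mul_of_nonneg geom_int (fun _ => by positivity)
    fun _ => by positivity).mul_left (‖q‖⁻¹ * (B * (C * C)))) ?_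
  rintro ⟨N, r⟩
  by_cases hr : r.natAbs ≤ N + 1
  · have hpow : ‖(-1) ^ N * q ^ (N * (N + 1))‖ ≤ ‖q‖⁻¹ * (‖q‖ ^ N * ‖q‖ ^ r.natAbs) := by
      rw [norm_mul, norm_pow, norm_neg, norm_one, one_pow, one_mul, norm_pow, ← pow_add,
        le_inv_mul_iff₀ (norm_pos_iff.2 hq0), ← pow_succ']
      exact pow_le_pow_of_le_one (norm_nonneg q) hq.le (by nlinarith [N.le_mul_self])
    calc _ ≤ ‖q‖⁻¹ * (‖q‖ ^ N * ‖q‖ ^ r.natAbs) * (B * (C * C)) := by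
          simp only [norm_mul _ (qPoch _ _ _ * _), norm_mul (qPoch _ _ _), norm_mul (invQPoch _ _)]
          gcongr
          exacts [hB N, hC _, hC _]
      _ = _ := by ring
  · have hzero : invQPoch (q ^ 2) (N - r) * invQPoch (q ^ 2) (N + r + 1) = 0 :=
      invQPoch_mul_eq_zero (q ^ 2) (c := 1) (by rw [mem_Icc]; lia)
    simp only [hzero, mul_zero, norm_zero]
    positivity

theorem exists_hasSum_baileySum_one (hq0 : q ≠ 0) (hq : ‖q‖ < 1) {A : ℤ → ℂ} {D : ℝ}
    (hA : ∀ r, ‖A r‖ ≤ D) :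
    ∃ S, HasSum (fun N : ℕ => (-1) ^ N * q ^ (N * (N + 1)) * baileySum (q ^ 2) 1 A N) S ∧
      HasSum (fun r : ℤ => (2 * r + 1).sign * ((-1) ^ r * q ^ (r ^ 2 + r)) * A r) S := by
  let E (p : ℕ × ℤ) : ℂ := (-1) ^ p.1 * q ^ (p.1 * (p.1 + 1)) * (qPoch (q ^ 2) (q ^ 2) p.1 *
    (invQPoch (q ^ 2) (p.1 - p.2) * invQPoch (q ^ 2) (p.1 + p.2 + 1))) * A p.2
  have summable_E : Summable E := by
    refine .of_norm_bounded ((summable_pow_mul_invQPoch hq0 hq).norm.mul_right D) fun p => ?_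
    rw [norm_mul]
    exact mul_le_mul_of_nonneg_left (hA _) (norm_nonneg _)
  have rows (N : ℕ) : HasSum (fun r => E (N, r))
      ((-1) ^ N * q ^ (N * (N + 1)) * baileySum (q ^ 2) 1 A N) := by
    have expand : (-1) ^ N * q ^ (N * (N + 1)) * baileySum (q ^ 2) 1 A N =
        ∑ r ∈ Icc (-(N + 1) : ℤ) N, E (N, r) := by
      rw [baileySum, mul_sum, mul_sum]
      refine sum_congr (by rw [Nat.cast_one]) fun r _ => ?_
      simp only [E, Nat.cast_one]
      ring
    rw [expand]
    refine hasSum_sum_of_ne_finset_zero fun r hr => ?_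
    have hzero : invQPoch (q ^ 2) (N - r) * invQPoch (q ^ 2) (N + r + 1) = 0 :=
      invQPoch_mul_eq_zero (q ^ 2) (c := 1) hr
    simp only [E, hzero, mul_zero, zero_mul]
  exact ⟨∑' p, E p, summable_E.hasSum.prod_fiberwise rows,
    ((Equiv.prodComm ℤ ℕ).hasSum_iff.2 summable_E.hasSum).prod_fiberwise fun r =>
      (hasSum_pow_mul_invQPoch hq r).mul_right (A r)⟩

end Gauss

section Pad

lemma pad_val {k : ℕ} (g : Fin k → ℕ) (i : Fin k) : pad k g i = g i := dif_pos i.2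

lemma pad_snoc_last {k : ℕ} (g : Fin k → ℕ) (x : ℕ) : pad (k + 1) (Fin.snoc g x) k = x := by
  simp [pad, Fin.snoc]

lemma pad_snoc_of_lt {k i : ℕ} (hi : i < k) (g : Fin k → ℕ) (x : ℕ) :
    pad (k + 1) (Fin.snoc g x) i = pad k g i := by
  simp [pad, Fin.snoc, hi, hi.trans k.lt_succ_self]

end Pad

section ChainTerm

variable {q : ℂ}

/-- The factors of `Lterm (k + 2) a q n` other than `(-1) ^ n_{k+1} * q ^ (n_{k+1} (n_{k+1} + 1))`;
its sum over the first `k` entries of `n` is `chainSum q a k (n k)`. -/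
noncomputable def chainTerm (q : ℂ) (a k : ℕ) (n : ℕ → ℕ) : ℂ :=
  (qPoch (-q) (q ^ 2) (n 0 + if a = 0 then 1 else 0))⁻¹ *
    ∏ i ∈ range k, chainWeight q a i (n i) (n (i + 1))

lemma Lterm_add_two (q : ℂ) (a k : ℕ) (n : ℕ → ℕ) :
    Lterm (k + 2) a q n = (-1) ^ n k * q ^ (n k * (n k + 1)) * chainTerm q a k n := by
  have hfilter : (range k).filter (a ≤ ·) = Ico a k := by
    ext i
    simp [and_comm]
  have hexp : ∑ i ∈ range k, (n i ^ 2 + (if a ≤ i then 1 else 0) * n i) =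
      ∑ i ∈ range k, n i ^ 2 + ∑ i ∈ Ico a k, n i := by
    simp only [sum_add_distrib, ite_mul, one_mul, zero_mul, ← sum_filter, hfilter]
  simp only [Lterm, chainTerm, chainWeight, prod_mul_distrib, prod_pow_eq_pow_sum, hexp,
    Nat.add_sub_cancel, ← mul_sum]
  ring

lemma chainTerm_succ_snoc (q : ℂ) (a : ℕ) {k : ℕ} (n : Fin (k + 1) → ℕ) (x : ℕ) :
    chainTerm q a (k + 1) (pad (k + 2) (Fin.snoc n x)) =
      chainWeight q a k (pad (k + 1) n k) x * chainTerm q a k (pad (k + 1) n) := by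
  have hprod : ∀ i ∈ range k,
      chainWeight q a i (pad (k + 2) (Fin.snoc n x) i) (pad (k + 2) (Fin.snoc n x) (i + 1)) =
        chainWeight q a i (pad (k + 1) n i) (pad (k + 1) n (i + 1)) := by
    intro i hi
    have hik := mem_range.1 hi
    rw [pad_snoc_of_lt (by lia), pad_snoc_of_lt (by lia)]
  rw [chainTerm, chainTerm, prod_range_succ, prod_congr rfl hprod, pad_snoc_last,
    pad_snoc_of_lt k.lt_succ_self, pad_snoc_of_lt k.succ_pos]
  ring

lemma exists_norm_qBinom_le {Q : ℂ} (hQ : ‖Q‖ < 1) : ∃ C, ∀ n k, ‖qBinom Q n k‖ ≤ C := by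
  obtain ⟨B, hB⟩ := exists_norm_qPoch_le hQ hQ
  obtain ⟨C, hC⟩ := exists_norm_inv_qPoch_le hQ hQ
  have hB0 : 0 ≤ B := (norm_nonneg _).trans (hB 0)
  have hC0 : 0 ≤ C := (norm_nonneg _).trans (hC 0)
  refine ⟨B * (C * C), fun n k => ?_⟩
  rw [qBinom]
  split_ifs
  · rw [div_eq_mul_inv, mul_inv, norm_mul, norm_mul]
    gcongr
    exacts [hB n, hC _, hC k]
  · rw [norm_zero]
    positivity

lemma exists_norm_chainTerm_le (hq : ‖q‖ < 1) (a k : ℕ) :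
    ∃ C, ∀ n, ‖chainTerm q a k n‖ ≤ C * ∏ i ∈ range k, ‖q‖ ^ n i := by
  have hQ := norm_sq_lt_one hq
  obtain ⟨B, hB⟩ := exists_norm_qBinom_le hQ
  obtain ⟨C, hC⟩ := exists_norm_inv_qPoch_le (x := -q) (by rwa [norm_neg]) hQ
  have hB0 : 0 ≤ B := (norm_nonneg _).trans (hB 0 0)
  have hweight (i s x : ℕ) : ‖chainWeight q a i s x‖ ≤ B * ‖q‖ ^ s := by
    rw [chainWeight, norm_mul, mul_comm, ← pow_mul, norm_pow]
    gcongr ?_ * ?_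
    · exact hB _ s
    · refine pow_le_pow_of_le_one (norm_nonneg q) hq.le ?_
      nlinarith [s.le_mul_self, Nat.zero_le ((if a ≤ i then 1 else 0) * s)]
  refine ⟨C * B ^ k, fun n => ?_⟩
  calc ‖chainTerm q a k n‖ ≤ C * ∏ i ∈ range k, (B * ‖q‖ ^ n i) := by
        rw [chainTerm, norm_mul, norm_prod]
        exact mul_le_mul (hC _) (prod_le_prod (fun _ _ => norm_nonneg _) fun i _ => hweight i _ _)
          (prod_nonneg fun _ _ => norm_nonneg _) ((norm_nonneg _).trans (hC 0))
    _ = C * B ^ k * ∏ i ∈ range k, ‖q‖ ^ n i := by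
        rw [prod_mul_distrib, prod_const, card_range, mul_assoc]

lemma summable_of_norm_le_prod_pow (hq : ‖q‖ < 1) {k : ℕ} {f : (Fin k → ℕ) → ℂ} {C : ℝ}
    (hf : ∀ g, ‖f g‖ ≤ C * ∏ i ∈ range k, ‖q‖ ^ pad k g i) : Summable f := by
  have geom := summable_geometric_of_lt_one (norm_nonneg q) hq
  refine .of_norm_bounded ((summable_prod_apply geom (fun _ => by positivity) k).mul_left C)
    fun g => (hf g).trans_eq ?_
  rw [prod_range]
  simp only [pad_val]

lemma hasSum_chainTerm (hq : ‖q‖ < 1) (a k x : ℕ) :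
    HasSum (fun g : Fin k → ℕ => chainTerm q a k (pad (k + 1) (Fin.snoc g x)))
      (chainSum q a k x) := by
  induction k generalizing x with
  | zero => simp [chainTerm, chainSum, pad_snoc_last]
  | succ k ih =>
    obtain ⟨C, hC⟩ := exists_norm_chainTerm_le hq a (k + 1)
    have hsum : Summable fun g : Fin (k + 1) → ℕ =>
        chainTerm q a (k + 1) (pad (k + 2) (Fin.snoc g x)) := by
      refine summable_of_norm_le_prod_pow hq (C := C) fun g => (hC _).trans_eq ?_
      congr 1
      exact prod_congr rfl fun i hi => by rw [pad_snoc_of_lt (mem_range.1 hi)]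
    refine hasSum_of_hasSum_snoc hsum
      (fun s => ((ih s).mul_left (chainWeight q a k s x)).congr_fun fun g => ?_) ?_
    · rw [chainTerm_succ_snoc, pad_snoc_last]
    refine hasSum_sum_of_ne_finset_zero fun s hs => ?_
    rw [chainWeight, qBinom, if_neg (c := s ≤ _) (by simpa using hs), mul_zero, zero_mul]

theorem hasSum_Lterm (hq : ‖q‖ < 1) (a k : ℕ) {S : ℂ}
    (hS : HasSum (fun x => (-1) ^ x * q ^ (x * (x + 1)) * chainSum q a k x) S) :
    HasSum (fun n : Fin (k + 1) → ℕ => Lterm (k + 2) a q (pad (k + 1) n)) S := by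
  obtain ⟨C, hC⟩ := exists_norm_chainTerm_le hq a k
  have hsum : Summable fun n : Fin (k + 1) → ℕ => Lterm (k + 2) a q (pad (k + 1) n) := by
    refine summable_of_norm_le_prod_pow hq (C := C) fun n => ?_
    rw [Lterm_add_two, norm_mul, prod_range_succ, ← mul_assoc, mul_comm]
    exact mul_le_mul (hC _) (norm_pow_mul_succ_le hq.le _ 0) (norm_nonneg _)
      ((norm_nonneg _).trans (hC _))
  refine hasSum_of_hasSum_snoc hsum (fun x => ?_) hS
  refine ((hasSum_chainTerm hq a k x).mul_left _).congr_fun fun g => ?_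
  rw [Lterm_add_two, pad_snoc_last]

end ChainTerm

section FalseTheta

variable {q : ℂ} {m a : ℕ}

/-- The general term of the false theta series `∑_{r ∈ ℤ} ± q ^ ((2m-1) r ^ 2 + 2 (m-a-1) r)`,
whose sign is that of `r`, taken to be `+` at `r = 0`. -/
noncomputable def falseThetaTerm (m a : ℕ) (q : ℂ) (r : ℤ) : ℂ :=
  (2 * r + 1).sign * q ^ ((2 * m - 1) * r ^ 2 + 2 * (m - a - 1) * r)

theorem hasSum_falseThetaTerm (hq0 : q ≠ 0) (hq : ‖q‖ < 1) (ham : a + 2 ≤ m) :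
    HasSum (falseThetaTerm m a q) (L m a q) := by
  obtain ⟨j, rfl⟩ : ∃ j, m = a + j + 2 := ⟨m - (a + 2), by lia⟩
  have hQ := norm_sq_lt_one hq
  have hP := qPoch_ne_zero hQ hQ.le
  have hN := qPoch_ne_zero (x := -q) (by rwa [norm_neg]) hQ.le
  let A (r : ℤ) : ℂ := (q ^ 2) ^ (j * (r ^ 2 + r)) * thetaTerm q a r
  have A_eq (r : ℤ) :
      A r = (-1) ^ r * q ^ (2 * j * (r ^ 2 + r) + (2 * (a + 1) * r ^ 2 + r)) := by
    simp only [A, thetaTerm]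
    rw [mul_left_comm, ← zpow_natCast q 2, ← zpow_mul, ← zpow_add₀ hq0]
    push_cast
    ring_nf
  have norm_A (r : ℤ) : ‖A r‖ ≤ 1 := by
    rw [A_eq, norm_mul, norm_zpow, norm_neg, norm_one, one_zpow, one_mul]
    have hr : 0 ≤ r ^ 2 + r := by nlinarith [sq_nonneg (2 * r + 1)]
    exact norm_zpow_le_one hq.le (by nlinarith [mul_nonneg a.cast_nonneg (sq_nonneg r)])
  obtain ⟨S, hS, hfalse⟩ := exists_hasSum_baileySum_one hq0 hq norm_A
  simp only [A, ← chainSum_add hq0 hP hN] at hS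
  have hL : L (a + j + 2) a q = S := (hasSum_Lterm hq a (a + j) hS).tsum_eq
  rw [hL]
  refine hfalse.congr_fun fun r => ?_
  have hsign : (-1 : ℂ) ^ r * (-1) ^ r = 1 := by rw [← mul_zpow]; simp
  have hexp : (2 * (a + j + 2 : ℕ) - 1) * r ^ 2 + 2 * ((a + j + 2 : ℕ) - a - 1) * r =
      r ^ 2 + r + (2 * j * (r ^ 2 + r) + (2 * (a + 1) * r ^ 2 + r)) := by
    push_cast
    ring
  rw [falseThetaTerm, hexp, zpow_add₀ hq0, A_eq]
  linear_combination (-((2 * r + 1).sign * q ^ (r ^ 2 + r) *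
    q ^ (2 * j * (r ^ 2 + r) + (2 * (a + 1) * r ^ 2 + r)))) * hsign

/-- The integer `k = 2 (2m-1) r + 2 (m-a-1)`, for which `k ^ 2 / (4 (2m-1))` is the exponent of
`falseThetaTerm m a q r` up to the additive constant `(m-a-1) ^ 2 / (2m-1)`. -/
def falseThetaIndex (m a : ℕ) (r : ℤ) : ℤ := 2 * (2 * m - 1) * r + 2 * (m - a - 1)

lemma natAbs_falseThetaIndex_injective (ham : a + 2 ≤ m) :
    Function.Injective fun r => (falseThetaIndex m a r).natAbs := by
  intro r s hrs
  rcases Int.natAbs_eq_natAbs_iff.1 hrs with h | h <;> simp only [falseThetaIndex] at h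
  · exact mul_left_cancel₀ (show 2 * (2 * (m : ℤ) - 1) ≠ 0 by lia) (by linarith)
  · rcases le_or_gt 0 (r + s) with hsum | hsum <;> nlinarith

lemma falseThetaIndex_nonneg_iff (ham : a + 2 ≤ m) (r : ℤ) : 0 ≤ falseThetaIndex m a r ↔ 0 ≤ r := by
  rw [falseThetaIndex]
  constructor <;> intro h
  · by_contra! hr
    nlinarith
  · nlinarith

lemma chiL_falseThetaIndex (m a : ℕ) (r : ℤ) : chiL m a (falseThetaIndex m a r) = 1 :=
  if_pos (Int.mul_add_emod_self_left _ _ _)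

lemma chiL_neg_falseThetaIndex (ham : a + 2 ≤ m) (r : ℤ) :
    chiL m a (-falseThetaIndex m a r) = -1 := by
  have hmod : -falseThetaIndex m a r % (2 * (2 * m - 1)) = 2 * (m + a) := by
    rw [falseThetaIndex, show -(2 * (2 * (m : ℤ) - 1) * r + 2 * (m - a - 1)) =
      2 * (2 * m - 1) * (-r - 1) + 2 * (m + a) by ring, Int.mul_add_emod_self_left,
      Int.emod_eq_of_lt (by lia) (by lia)]
  rw [chiL, hmod, Int.emod_eq_of_lt (by lia) (by lia), Int.emod_eq_of_lt (by lia) (by lia),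
    if_neg (by lia), if_pos rfl]

lemma chiL_natAbs_falseThetaIndex (ham : a + 2 ≤ m) (r : ℤ) :
    chiL m a (falseThetaIndex m a r).natAbs = (2 * r + 1).sign := by
  rcases le_or_gt 0 r with hr | hr
  · rw [Int.natAbs_of_nonneg ((falseThetaIndex_nonneg_iff ham r).2 hr), chiL_falseThetaIndex,
      Int.sign_eq_one_of_pos (by lia)]
  · rw [Int.ofNat_natAbs_of_nonpos (not_lt.1 fun h => hr.not_ge
      ((falseThetaIndex_nonneg_iff ham r).1 h.le)), chiL_neg_falseThetaIndex ham,
      Int.sign_eq_neg_one_of_neg (by lia)]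

lemma mem_range_natAbs_falseThetaIndex {k : ℕ} (hk : chiL m a k ≠ 0) :
    k ∈ Set.range fun r => (falseThetaIndex m a r).natAbs := by
  simp only [Set.mem_range, falseThetaIndex]
  by_cases h1 : (k : ℤ) ≡ 2 * (m - a - 1) [ZMOD 2 * (2 * m - 1)]
  · obtain ⟨t, ht⟩ := h1.symm.dvd
    exact ⟨t, by lia⟩
  · by_cases h2 : (k : ℤ) ≡ 2 * (m + a) [ZMOD 2 * (2 * m - 1)]
    · obtain ⟨t, ht⟩ := h2.symm.dvd
      refine ⟨-t - 1, ?_⟩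
      rw [show 2 * (2 * (m : ℤ) - 1) * (-t - 1) + 2 * (m - a - 1) = -k by linarith,
        Int.natAbs_neg, Int.natAbs_natCast]
    · exact absurd ((if_neg h1).trans (if_neg h2)) hk

lemma cpow_natAbs_falseThetaIndex (hq0 : q ≠ 0) (m a : ℕ) (r : ℤ) :
    q ^ (((falseThetaIndex m a r).natAbs : ℂ) ^ 2 / (4 * (2 * m - 1))) =
      q ^ (((m : ℂ) - a - 1) ^ 2 / (2 * m - 1)) *
        q ^ ((2 * m - 1) * r ^ 2 + 2 * (m - a - 1) * r : ℤ) := by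
  have hsq : ((falseThetaIndex m a r).natAbs : ℂ) ^ 2 = (falseThetaIndex m a r : ℂ) ^ 2 := by
    rw [Nat.cast_natAbs, ← Int.cast_pow, sq_abs, Int.cast_pow]
  have hm : 2 * (m : ℂ) - 1 ≠ 0 := by
    exact_mod_cast (show 2 * (m : ℤ) - 1 ≠ 0 by lia)
  rw [hsq, ← Complex.cpow_intCast, ← Complex.cpow_add _ _ hq0, falseThetaIndex]
  congr 1
  push_cast
  field_simp
  ring

end FalseTheta

theorem stmt15_general {m a : ℕ} (ham : a + 2 ≤ m) {q : ℂ} (hq0 : q ≠ 0) (hq : ‖q‖ < 1) :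
    HasSum (fun k : ℕ => (chiL m a k : ℂ) * q ^ ((k : ℂ) ^ 2 / (4 * (2 * m - 1))))
      (q ^ (((m : ℂ) - a - 1) ^ 2 / (2 * m - 1)) * L m a q) := by
  rw [← (natAbs_falseThetaIndex_injective ham).hasSum_iff fun k hk => ?_]
  · refine ((hasSum_falseThetaTerm hq0 hq ham).mul_left _).congr_fun fun r => ?_
    rw [Function.comp_apply, chiL_natAbs_falseThetaIndex ham,
      cpow_natAbs_falseThetaIndex hq0, falseThetaTerm, mul_left_comm]
  · rw [not_not.1 (mt mem_range_natAbs_falseThetaIndex hk), Int.cast_zero, zero_mul]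

theorem stmt15 (m a : ℕ) (hm : 2 ≤ m) (ha : a ≤ m - 2) (q : ℝ) (hq0 : 0 < q) (hq1 : q < 1) :
    ((2 * (m : ℂ) - 1) / 2) *
        ((q ^ (((m : ℝ) - a - 1) ^ 2 / (2 * (m : ℝ) - 1)) : ℝ) : ℂ) * L m a (q : ℂ) =
      ((2 * (m : ℂ) - 1) / 2) *
        ∑' k : ℕ, (chiL m a k : ℂ) *
          ((q ^ ((k : ℝ) ^ 2 / (4 * (2 * (m : ℝ) - 1))) : ℝ) : ℂ) := by
  have h := stmt15_general (q := q) (show a + 2 ≤ m by lia) (mod_cast hq0.ne')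
    (by simpa [abs_of_pos hq0] using hq1)
  simp [mul_assoc, Complex.ofReal_cpow hq0.le, h.tsum_eq]
end

section
/- Let m ≥ 2 and 0 ≤ a ≤ m−2 be integers, and let M, N be coprime integers with N positive. Then lim_{t→0⁺} ((2m−1)/2)·Σ_{k=0}^{∞} χ_{2(2m−1)}^{(a)}(k)·e^{(2πiM/N − t)·k²/(4(2m−1))} = −(1/(8(2m−1)N²))·Σ_{k=0}^{(4m−2)N} k²·χ_{2(2m−1)}^{(a)}(k)·e^{2πiMk²/(4(2m−1)N)}. -/
open Finset

/-! Put `L = 2m - 1`. Since `χ` is odd and `2L`-periodic, `χ(k) exp(2πi M k² / (4LN))` is odd and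
`2LN`-periodic in `k`, so what matters is the limit of `∑ f(k) exp(-s k²)` as `s → 0⁺` for an odd
`P`-periodic `f`. Such an `f` has mean zero over a period, so it has a periodic antidifference `u`;
normalising `u` to mean zero gives a periodic, hence bounded, `v` with `f = Δ²v`. Summing by parts
twice moves both differences onto the Gaussian, whose second differences at `k` are at most
`8 / (1 + k²)` uniformly in `s ≤ 1` and tend to `0`; only the boundary term
`-Δv(0) = -P⁻¹ ∑ k f(k)` survives. Finally the reflection `k ↦ P - k` and oddness turn
`P ∑ k f(k)` into `∑ k² f(k)`. -/

open Filter Topology fwdDiff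

section SummationByParts

variable {E : Type*} [NormedAddCommGroup E] [NormedSpace ℝ E]

theorem tsum_smul_fwdDiff {φ : ℕ → ℝ} {u : ℕ → E} (h : Summable fun k ↦ φ k • u k)
    (h' : Summable fun k ↦ φ k • u (k + 1)) :
    ∑' k, φ k • Δ_[1] u k = -(φ 0 • u 0) - ∑' k, Δ_[1] φ k • u (k + 1) := by
  have hsucc : Summable fun k ↦ φ (k + 1) • u (k + 1) := (summable_nat_add_iff 1).2 h
  simp only [fwdDiff, smul_sub, sub_smul]
  rw [h'.tsum_sub h, hsucc.tsum_sub h', h.tsum_eq_zero_add]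
  abel

variable [CompleteSpace E]

theorem summable_smul_of_norm_le {φ : ℕ → ℝ} (hφ : Summable φ) {u : ℕ → E} {C : ℝ}
    (hu : ∀ k, ‖u k‖ ≤ C) : Summable fun k ↦ φ k • u k :=
  .of_norm_bounded (hφ.norm.mul_right C) fun k ↦ by
    rw [norm_smul]
    gcongr
    exact hu k

theorem tsum_smul_fwdDiff_fwdDiff {φ : ℕ → ℝ} (hφ : Summable φ) {v : ℕ → E} {C : ℝ}
    (hv : ∀ k, ‖v k‖ ≤ C) :
    ∑' k, φ k • Δ_[1] (Δ_[1] v) k =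
      -(φ 0 • Δ_[1] v 0) + Δ_[1] φ 0 • v 1 + ∑' k, Δ_[1] (Δ_[1] φ) k • v (k + 2) := by
  have hΔv : ∀ k, ‖Δ_[1] v k‖ ≤ C + C := fun k ↦
    (norm_sub_le _ _).trans (add_le_add (hv _) (hv _))
  have hΔφ : Summable (Δ_[1] φ) := ((summable_nat_add_iff 1).2 hφ).sub hφ
  have hfirst := tsum_smul_fwdDiff (summable_smul_of_norm_le hφ hΔv)
    (summable_smul_of_norm_le hφ fun k ↦ hΔv (k + 1))
  have hsecond : ∑' k, Δ_[1] φ k • Δ_[1] v (k + 1) =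
      -(Δ_[1] φ 0 • v 1) - ∑' k, Δ_[1] (Δ_[1] φ) k • v (k + 2) :=
    tsum_smul_fwdDiff (u := fun k ↦ v (k + 1)) (summable_smul_of_norm_le hΔφ fun k ↦ hv (k + 1))
      (summable_smul_of_norm_le hΔφ fun k ↦ hv (k + 2))
  rw [hfirst, hsecond]
  abel

theorem tendsto_tsum_smul_fwdDiff_fwdDiff {α : Type*} {l : Filter α} {φ : α → ℕ → ℝ} {b : ℕ → ℝ}
    (hφ : ∀ᶠ s in l, Summable (φ s)) (hφ_one : ∀ k, Tendsto (φ · k) l (𝓝 1)) (hb : Summable b)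
    (hφb : ∀ᶠ s in l, ∀ k, ‖Δ_[1] (Δ_[1] (φ s)) k‖ ≤ b k) {v : ℕ → E} {C : ℝ}
    (hv : ∀ k, ‖v k‖ ≤ C) :
    Tendsto (fun s ↦ ∑' k, φ s k • Δ_[1] (Δ_[1] v) k) l (𝓝 (-Δ_[1] v 0)) := by
  have hΔφ (k : ℕ) : Tendsto (fun s ↦ Δ_[1] (φ s) k) l (𝓝 0) := by
    simpa only [fwdDiff, sub_self] using (hφ_one (k + 1)).sub (hφ_one k)
  have hΔΔφ (k : ℕ) : Tendsto (fun s ↦ Δ_[1] (Δ_[1] (φ s)) k) l (𝓝 0) := by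
    simpa only [fwdDiff, sub_self] using (hΔφ (k + 1)).sub (hΔφ k)
  have hremainder : Tendsto (fun s ↦ ∑' k, Δ_[1] (Δ_[1] (φ s)) k • v (k + 2)) l (𝓝 0) := by
    rw [← tsum_zero (β := ℕ)]
    refine tendsto_tsum_of_dominated_convergence (hb.mul_right C) (fun k ↦ ?_) ?_
    · simpa only [zero_smul] using (hΔΔφ k).smul_const (v (k + 2))
    · filter_upwards [hφb] with s hs k
      rw [norm_smul]
      exact mul_le_mul (hs k) (hv _) (norm_nonneg _) ((norm_nonneg _).trans (hs k))
  have hlim : Tendsto (fun s ↦ -(φ s 0 • Δ_[1] v 0) + Δ_[1] (φ s) 0 • v 1 +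
      ∑' k, Δ_[1] (Δ_[1] (φ s)) k • v (k + 2)) l (𝓝 (-Δ_[1] v 0)) := by
    simpa only [one_smul, zero_smul, add_zero] using
      (((hφ_one 0).smul_const (Δ_[1] v 0)).neg.add ((hΔφ 0).smul_const (v 1))).add hremainder
  refine hlim.congr' ?_
  filter_upwards [hφ] with s hs
  exact (tsum_smul_fwdDiff_fwdDiff hs hv).symm

end SummationByParts

section SecondDifferences

variable {E : Type*} [NormedAddCommGroup E] [NormedSpace ℝ E]

theorem norm_fwdDiff_le_of_norm_hasDerivAt_le {f f' : ℝ → E} {a h C : ℝ} (hh : 0 ≤ h)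
    (hf : ∀ x ∈ Set.Icc a (a + h), HasDerivAt f (f' x) x)
    (bound : ∀ x ∈ Set.Icc a (a + h), ‖f' x‖ ≤ C) : ‖Δ_[h] f a‖ ≤ C * h := by
  simpa only [fwdDiff, add_sub_cancel_left] using norm_image_sub_le_of_norm_deriv_le_segment'
    (fun x hx ↦ (hf x hx).hasDerivWithinAt) (fun x hx ↦ bound x (Set.Ico_subset_Icc_self hx))
    (a + h) (Set.right_mem_Icc.2 (le_add_of_nonneg_right hh))

theorem norm_fwdDiff_fwdDiff_le_of_norm_hasDerivAt_le {f f' f'' : ℝ → E} {a h C : ℝ} (hh : 0 ≤ h)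
    (hf : ∀ x ∈ Set.Icc a (a + 2 * h), HasDerivAt f (f' x) x)
    (hf' : ∀ x ∈ Set.Icc a (a + 2 * h), HasDerivAt f' (f'' x) x)
    (bound : ∀ x ∈ Set.Icc a (a + 2 * h), ‖f'' x‖ ≤ C) : ‖Δ_[h] (Δ_[h] f) a‖ ≤ C * h ^ 2 := by
  have hΔf' : ∀ x ∈ Set.Icc a (a + h), ‖Δ_[h] f' x‖ ≤ C * h := fun x hx ↦ by
    have hsub : Set.Icc x (x + h) ⊆ Set.Icc a (a + 2 * h) :=
      Set.Icc_subset_Icc hx.1 (by linarith [hx.2])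
    exact norm_fwdDiff_le_of_norm_hasDerivAt_le hh (fun y hy ↦ hf' y (hsub hy))
      fun y hy ↦ bound y (hsub hy)
  rw [pow_two, ← mul_assoc]
  refine norm_fwdDiff_le_of_norm_hasDerivAt_le hh (fun x hx ↦ ?_) hΔf'
  obtain ⟨hax, hxa⟩ := hx
  exact ((hf (x + h) ⟨by linarith, by linarith⟩).comp_add_const x h).sub
    (hf x ⟨hax, by linarith⟩)

end SecondDifferences

section Gaussian

theorem hasDerivAt_exp_neg_mul_sq (s x : ℝ) :
    HasDerivAt (fun x ↦ Real.exp (-s * x ^ 2)) (-2 * s * x * Real.exp (-s * x ^ 2)) x := by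
  refine ((hasDerivAt_pow 2 x).const_mul (-s)).exp.congr_deriv ?_
  push_cast
  ring

theorem hasDerivAt_mul_exp_neg_mul_sq (s x : ℝ) :
    HasDerivAt (fun x ↦ -2 * s * x * Real.exp (-s * x ^ 2))
      ((4 * s ^ 2 * x ^ 2 - 2 * s) * Real.exp (-s * x ^ 2)) x := by
  refine (((hasDerivAt_id' x).const_mul (-2 * s)).fun_mul
    (hasDerivAt_exp_neg_mul_sq s x)).congr_deriv ?_
  ring

theorem abs_mul_exp_neg_mul_sq_le {s : ℝ} (hs₀ : 0 ≤ s) (hs₁ : s ≤ 1) (x : ℝ) :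
    |(4 * s ^ 2 * x ^ 2 - 2 * s) * Real.exp (-s * x ^ 2)| ≤ 8 / (1 + x ^ 2) := by
  have hy : 0 ≤ s * x ^ 2 := by positivity
  have habs : |4 * s ^ 2 * x ^ 2 - 2 * s| ≤ 4 * s ^ 2 * x ^ 2 + 2 * s := by
    rw [abs_le]
    constructor <;> nlinarith [mul_nonneg hs₀ hy]
  rw [abs_mul, Real.abs_exp, neg_mul, Real.exp_neg, ← div_eq_mul_inv,
    div_le_div_iff₀ (Real.exp_pos _) (by positivity)]
  calc |4 * s ^ 2 * x ^ 2 - 2 * s| * (1 + x ^ 2)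
      ≤ (4 * s ^ 2 * x ^ 2 + 2 * s) * (1 + x ^ 2) := by gcongr
    _ = (4 * (s * x ^ 2) + 2) * (s + s * x ^ 2) := by ring
    _ ≤ (4 * (s * x ^ 2) + 2) * (1 + s * x ^ 2) := by gcongr
    _ ≤ 8 * (1 + s * x ^ 2 + (s * x ^ 2) ^ 2 / 2) := by nlinarith
    _ ≤ 8 * Real.exp (s * x ^ 2) := by gcongr; exact Real.quadratic_le_exp_of_nonneg hy

theorem norm_fwdDiff_fwdDiff_exp_neg_mul_sq_le {s : ℝ} (hs₀ : 0 ≤ s) (hs₁ : s ≤ 1) (k : ℕ) :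
    ‖Δ_[1] (Δ_[1] fun k : ℕ ↦ Real.exp (-s * (k : ℝ) ^ 2)) k‖ ≤ 8 / (1 + (k : ℝ) ^ 2) := by
  have hreal := norm_fwdDiff_fwdDiff_le_of_norm_hasDerivAt_le (a := k) zero_le_one
    (fun x _ ↦ hasDerivAt_exp_neg_mul_sq s x) (fun x _ ↦ hasDerivAt_mul_exp_neg_mul_sq s x)
    (C := 8 / (1 + (k : ℝ) ^ 2)) fun x hx ↦
      (abs_mul_exp_neg_mul_sq_le hs₀ hs₁ x).trans (by gcongr; exact hx.1)
  simpa only [fwdDiff, Nat.cast_add, Nat.cast_one, one_pow, mul_one] using hreal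

theorem summable_exp_neg_mul_sq {s : ℝ} (hs : 0 < s) :
    Summable fun k : ℕ ↦ Real.exp (-s * (k : ℝ) ^ 2) :=
  Real.summable_exp_nat_mul_of_ge (neg_lt_zero.2 hs)
    fun k ↦ mod_cast Nat.le_self_pow two_ne_zero k

theorem summable_div_one_add_sq (c : ℝ) : Summable fun k : ℕ ↦ c / (1 + (k : ℝ) ^ 2) := by
  have hsq : Summable fun k : ℕ ↦ ‖c‖ * (1 / (k : ℝ) ^ 2) :=
    (Real.summable_one_div_nat_pow.2 one_lt_two).mul_left ‖c‖
  refine hsq.of_norm_bounded_eventually_nat ?_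
  filter_upwards [eventually_gt_atTop 0] with k hk
  rw [norm_div, Real.norm_of_nonneg (by positivity : 0 ≤ 1 + (k : ℝ) ^ 2), div_eq_mul_one_div]
  gcongr
  exact le_add_of_nonneg_left zero_le_one

variable {E : Type*} [NormedAddCommGroup E] [NormedSpace ℝ E] [CompleteSpace E]

theorem tendsto_tsum_exp_neg_mul_sq_smul_fwdDiff_fwdDiff {v : ℕ → E} {C : ℝ}
    (hv : ∀ k, ‖v k‖ ≤ C) :
    Tendsto (fun s : ℝ ↦ ∑' k : ℕ, Real.exp (-s * (k : ℝ) ^ 2) • Δ_[1] (Δ_[1] v) k) (𝓝[>] 0)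
      (𝓝 (-Δ_[1] v 0)) := by
  refine tendsto_tsum_smul_fwdDiff_fwdDiff ?_ (fun k ↦ ?_) (summable_div_one_add_sq 8) ?_ hv
  · filter_upwards [self_mem_nhdsWithin] with s hs
    exact summable_exp_neg_mul_sq hs
  · have hcont : Continuous fun s : ℝ ↦ Real.exp (-s * (k : ℝ) ^ 2) := by fun_prop
    simpa using (hcont.tendsto 0).mono_left nhdsWithin_le_nhds
  · filter_upwards [Ioc_mem_nhdsGT zero_lt_one] with s hs
    exact norm_fwdDiff_fwdDiff_exp_neg_mul_sq_le hs.1.le hs.2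

end Gaussian

section Periodic

theorem fwdDiff_sum_range {G : Type*} [AddCommGroup G] (f : ℕ → G) :
    Δ_[1] (fun n ↦ ∑ k ∈ range n, f k) = f := by
  ext n
  simp only [fwdDiff, sum_range_succ, add_sub_cancel_left]

theorem sum_range_sum_range_add_sum_succ_nsmul {G : Type*} [AddCommMonoid G] (f : ℕ → G) (n : ℕ) :
    ∑ k ∈ range n, ∑ j ∈ range k, f j + ∑ k ∈ range n, (k + 1) • f k =
      n • ∑ k ∈ range n, f k := by
  induction n with
  | zero => simp
  | succ n ih =>
    simp only [sum_range_succ _ n, succ_nsmul _ n, smul_add, ← ih]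
    abel

theorem periodic_sum_range {G : Type*} [AddCommMonoid G] {f : ℕ → G} {P : ℕ}
    (hf : Function.Periodic f P) (hsum : ∑ k ∈ range P, f k = 0) :
    Function.Periodic (fun n ↦ ∑ k ∈ range n, f k) P := fun n ↦ by
  simp only [add_comm n P, sum_range_add, hsum, zero_add]
  exact sum_congr rfl fun k _ ↦ by rw [add_comm, hf]

theorem exists_norm_le_of_periodic {E : Type*} [SeminormedAddCommGroup E] {f : ℕ → E} {P : ℕ}
    (hP : 0 < P) (hf : Function.Periodic f P) : ∃ C, ∀ n, ‖f n‖ ≤ C :=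
  ⟨∑ k ∈ range P, ‖f k‖, fun n ↦ by
    rw [← hf.map_mod_nat n]
    exact single_le_sum (f := fun k ↦ ‖f k‖) (fun _ _ ↦ norm_nonneg _)
      (mem_range.2 (Nat.mod_lt n hP))⟩

theorem exists_periodic_fwdDiff_fwdDiff_eq {E : Type*} [AddCommGroup E] [Module ℝ E] {f : ℕ → E}
    {P : ℕ} (hP : 0 < P) (hf : Function.Periodic f P) (hsum : ∑ k ∈ range P, f k = 0) :
    ∃ v : ℕ → E, Function.Periodic v P ∧ Δ_[1] (Δ_[1] v) = f ∧
      Δ_[1] v 0 = (P : ℝ)⁻¹ • ∑ k ∈ range P, k • f k := by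
  set c := (P : ℝ)⁻¹ • ∑ k ∈ range P, k • f k with hc
  set u : ℕ → E := fun n ↦ ∑ k ∈ range n, f k + c with hu
  have hu_periodic : Function.Periodic u P := fun n ↦
    congrArg (· + c) (periodic_sum_range hf hsum n)
  have hu_sum : ∑ k ∈ range P, u k = 0 := by
    have hPc : P • c = ∑ k ∈ range P, k • f k := by
      rw [hc, ← Nat.cast_smul_eq_nsmul ℝ, smul_inv_smul₀ (mod_cast hP.ne')]
    have hdouble := sum_range_sum_range_add_sum_succ_nsmul f P
    simp only [add_smul, one_smul, sum_add_distrib, hsum, add_zero, smul_zero] at hdouble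
    simp only [hu, sum_add_distrib, sum_const, card_range, hPc, hdouble]
  refine ⟨fun n ↦ ∑ k ∈ range n, u k, periodic_sum_range hu_periodic hu_sum, ?_, ?_⟩
  · rw [fwdDiff_sum_range, show u = (fun n ↦ ∑ k ∈ range n, f k) + fun _ ↦ c from rfl,
      fwdDiff_add, fwdDiff_sum_range, fwdDiff_const]
    exact add_zero f
  · simp only [fwdDiff_sum_range, hu, range_zero, sum_empty, zero_add]

theorem tendsto_tsum_exp_neg_mul_sq_smul_of_periodic {E : Type*} [NormedAddCommGroup E]
    [NormedSpace ℝ E] [CompleteSpace E] {f : ℕ → E} {P : ℕ} (hP : 0 < P)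
    (hf : Function.Periodic f P) (hsum : ∑ k ∈ range P, f k = 0) :
    Tendsto (fun s : ℝ ↦ ∑' k : ℕ, Real.exp (-s * (k : ℝ) ^ 2) • f k) (𝓝[>] 0)
      (𝓝 (-((P : ℝ)⁻¹ • ∑ k ∈ range P, k • f k))) := by
  obtain ⟨v, hv, rfl, hv₀⟩ := exists_periodic_fwdDiff_fwdDiff_eq hP hf hsum
  obtain ⟨C, hC⟩ := exists_norm_le_of_periodic hP hv
  rw [← hv₀]
  exact tendsto_tsum_exp_neg_mul_sq_smul_fwdDiff_fwdDiff hC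

end Periodic

section OddPeriodic

section Sums

variable {G : Type*} [AddCommGroup G] {f : ℤ → G} {P : ℕ}

theorem sum_range_succ_nsmul_reflect_of_odd_periodic (hodd : f.Odd) (hf : Function.Periodic f P)
    (w : ℕ → ℕ) :
    ∑ k ∈ range (P + 1), w (P - k) • f k = -∑ k ∈ range (P + 1), w k • f k := by
  rw [← sum_range_reflect, ← sum_neg_distrib]
  refine sum_congr rfl fun k hk ↦ ?_
  have hkP : k ≤ P := Nat.lt_succ_iff.1 (mem_range.1 hk)
  rw [Nat.add_sub_cancel, Nat.sub_sub_self hkP, Nat.cast_sub hkP, hf.sub_eq', hodd, smul_neg]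

variable [IsAddTorsionFree G]

theorem map_period_eq_zero_of_odd (hodd : f.Odd) (hf : Function.Periodic f P) : f P = 0 := by
  rw [hf.eq, hodd.map_zero]

theorem sum_range_eq_zero_of_odd_periodic (hodd : f.Odd) (hf : Function.Periodic f P) :
    ∑ k ∈ range P, f k = 0 := by
  have h := sum_range_succ_nsmul_reflect_of_odd_periodic hodd hf fun _ ↦ 1
  simpa only [one_smul, self_eq_neg, sum_range_succ, map_period_eq_zero_of_odd hodd hf, add_zero]
    using h

theorem sum_range_succ_sq_nsmul_of_odd_periodic (hodd : f.Odd) (hf : Function.Periodic f P) :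
    ∑ k ∈ range (P + 1), k ^ 2 • f k = P • ∑ k ∈ range P, k • f k := by
  have hP := map_period_eq_zero_of_odd hodd hf
  have hsum : ∑ k ∈ range (P + 1), f k = 0 := by
    rw [sum_range_succ, hP, add_zero, sum_range_eq_zero_of_odd_periodic hodd hf]
  have hsum₁ : ∑ k ∈ range (P + 1), k • f k = ∑ k ∈ range P, k • f k := by
    rw [sum_range_succ, hP, smul_zero, add_zero]
  have hexpand : ∑ k ∈ range (P + 1), (P - k) ^ 2 • f k + (2 * P) • ∑ k ∈ range P, k • f k =
      ∑ k ∈ range (P + 1), k ^ 2 • f k := by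
    rw [← add_zero (∑ k ∈ range (P + 1), k ^ 2 • f k), ← smul_zero (P ^ 2), ← hsum, ← hsum₁,
      smul_sum, smul_sum, ← sum_add_distrib, ← sum_add_distrib]
    refine sum_congr rfl fun k hk ↦ ?_
    obtain ⟨d, rfl⟩ := Nat.exists_eq_add_of_le (Nat.lt_succ_iff.1 (mem_range.1 hk))
    rw [Nat.add_sub_cancel_left, smul_smul, ← add_smul, ← add_smul]
    congr 1
    ring
  rw [sum_range_succ_nsmul_reflect_of_odd_periodic hodd hf fun k ↦ k ^ 2, neg_add_eq_iff_eq_add,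
    ← two_nsmul, mul_smul] at hexpand
  exact (nsmul_right_injective two_ne_zero hexpand).symm

end Sums

theorem tendsto_tsum_exp_neg_mul_sq_smul_of_odd_periodic {E : Type*} [NormedAddCommGroup E]
    [NormedSpace ℝ E] [CompleteSpace E] {f : ℤ → E} {P : ℕ} (hP : 0 < P) (hodd : f.Odd)
    (hf : Function.Periodic f P) :
    Tendsto (fun s : ℝ ↦ ∑' k : ℕ, Real.exp (-s * (k : ℝ) ^ 2) • f k) (𝓝[>] 0)
      (𝓝 (-(((P : ℝ) ^ 2)⁻¹ • ∑ k ∈ range (P + 1), k ^ 2 • f k))) := by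
  have : IsAddTorsionFree E := .of_isTorsionFree ℝ E
  have hf' : Function.Periodic (fun k : ℕ ↦ f k) P := fun k ↦ by
    simpa only [Nat.cast_add] using hf k
  have hP' : (P : ℝ) ≠ 0 := mod_cast hP.ne'
  convert tendsto_tsum_exp_neg_mul_sq_smul_of_periodic hP hf'
    (sum_range_eq_zero_of_odd_periodic hodd hf) using 3
  rw [sum_range_succ_sq_nsmul_of_odd_periodic hodd hf, ← Nat.cast_smul_eq_nsmul ℝ P, smul_smul]
  congr 1
  field_simp

end OddPeriodic

section Twist

/-- The coefficient `χ(k) exp(2πi M k² / (4LN))` that multiplies `exp(-t k² / (4L))` in the series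
attached to the root of unity `exp(2πi M / N)`. -/
noncomputable def quadraticTwist (χ : ℤ → ℂ) (L N : ℕ) (M k : ℤ) : ℂ :=
  χ k * Complex.exp (2 * Real.pi * Complex.I * M * (k : ℂ) ^ 2 / (4 * L * N))

variable {χ : ℤ → ℂ} {L N : ℕ}

theorem odd_quadraticTwist (hχ : χ.Odd) (M : ℤ) : (quadraticTwist χ L N M).Odd := fun k ↦ by
  simp only [quadraticTwist, hχ k, Int.cast_neg, neg_sq, neg_mul]

theorem periodic_quadraticTwist (hL : 0 < L) (hN : 0 < N) (hχ : Function.Periodic χ (2 * L : ℕ))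
    (M : ℤ) : Function.Periodic (quadraticTwist χ L N M) (2 * L * N : ℕ) := fun k ↦ by
  have hχk : χ (k + (2 * L * N : ℕ)) = χ k := by
    simpa only [Nat.cast_mul, mul_comm (N : ℤ)] using hχ.nat_mul N k
  have hL' : (L : ℂ) ≠ 0 := mod_cast hL.ne'
  have hN' : (N : ℂ) ≠ 0 := mod_cast hN.ne'
  unfold quadraticTwist
  rw [hχk]
  congr 1
  refine Complex.exp_eq_exp_iff_exists_int.2 ⟨M * (k + L * N), ?_⟩
  push_cast
  field_simp
  ring

theorem exp_smul_quadraticTwist (M k : ℤ) (t : ℝ) :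
    Real.exp (-((4 * L : ℝ)⁻¹ * t) * (k : ℝ) ^ 2) • quadraticTwist χ L N M k =
      χ k * Complex.exp ((2 * Real.pi * Complex.I * M / N - t) * ((k : ℂ) ^ 2 / (4 * L))) := by
  rw [quadraticTwist, Complex.real_smul, mul_left_comm, Complex.ofReal_exp, ← Complex.exp_add]
  congr 2
  push_cast
  ring

end Twist

theorem stmt16_general {χ : ℤ → ℂ} {L N : ℕ} (hL : 0 < L) (hN : 0 < N) (hodd : χ.Odd)
    (hχ : Function.Periodic χ (2 * L : ℕ)) (M : ℤ) :
    Tendsto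
      (fun t : ℝ ↦ ((L : ℂ) / 2) * ∑' k : ℕ, χ k *
        Complex.exp ((2 * Real.pi * Complex.I * M / N - t) * ((k : ℂ) ^ 2 / (4 * L))))
      (𝓝[>] 0)
      (𝓝 (-(1 / (8 * L * (N : ℂ) ^ 2)) * ∑ k ∈ range (2 * L * N + 1), (k : ℂ) ^ 2 * χ k *
        Complex.exp (2 * Real.pi * Complex.I * M * (k : ℂ) ^ 2 / (4 * L * N)))) := by
  have hscale : Tendsto (fun t : ℝ ↦ (4 * L : ℝ)⁻¹ * t) (𝓝[>] 0) (𝓝[>] 0) :=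
    tendsto_iff_comap.2 (comap_mulLeft_nhdsGT_zero (by positivity)).ge
  have hlim := ((tendsto_tsum_exp_neg_mul_sq_smul_of_odd_periodic (by positivity)
    (odd_quadraticTwist hodd M) (periodic_quadraticTwist hL hN hχ M)).comp hscale).const_mul
    ((L : ℂ) / 2)
  convert hlim using 2 with t
  · simp only [Function.comp_apply]
    refine congrArg _ (tsum_congr fun k ↦ ?_)
    simpa only [Int.cast_natCast] using (exp_smul_quadraticTwist M k t).symm
  · have hL' : (L : ℂ) ≠ 0 := mod_cast hL.ne'
    have hN' : (N : ℂ) ≠ 0 := mod_cast hN.ne'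
    have hsum : ∑ k ∈ range (2 * L * N + 1), (k : ℂ) ^ 2 * χ k *
        Complex.exp (2 * Real.pi * Complex.I * M * (k : ℂ) ^ 2 / (4 * L * N)) =
          ∑ k ∈ range (2 * L * N + 1), k ^ 2 • quadraticTwist χ L N M k :=
      sum_congr rfl fun k _ ↦ by
        simp only [quadraticTwist, nsmul_eq_mul, Nat.cast_pow, Int.cast_natCast, mul_assoc]
    rw [hsum, Complex.real_smul]
    push_cast
    field_simp
    ring

section Character

theorem neg_modEq_iff_of_add_eq {n x y z : ℤ} (h : y + z = n) :
    -x ≡ y [ZMOD n] ↔ x ≡ z [ZMOD n] := by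
  rw [← Int.neg_modEq_neg, neg_neg, show -y = z - n by linarith, Int.modEq_sub_modulus_iff]

theorem periodic_chiL {m : ℕ} (hm : 0 < m) (a : ℕ) :
    Function.Periodic (chiL m a) (2 * (2 * m - 1) : ℕ) := fun k ↦ by
  have hmodulus : ((2 * (2 * m - 1) : ℕ) : ℤ) = 2 * (2 * m - 1) := by omega
  simp only [chiL, hmodulus, Int.add_emod_right]

theorem odd_chiL {m a : ℕ} (h : ¬(2 * m - 1 : ℤ) ∣ 2 * a + 1) : (chiL m a).Odd := fun k ↦ by
  have hplus : -k ≡ 2 * ((m : ℤ) - a - 1) [ZMOD 2 * (2 * m - 1)] ↔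
      k ≡ 2 * ((m : ℤ) + a) [ZMOD 2 * (2 * m - 1)] := neg_modEq_iff_of_add_eq (by ring)
  have hminus : -k ≡ 2 * ((m : ℤ) + a) [ZMOD 2 * (2 * m - 1)] ↔
      k ≡ 2 * ((m : ℤ) - a - 1) [ZMOD 2 * (2 * m - 1)] := neg_modEq_iff_of_add_eq (by ring)
  have hdisjoint : k ≡ 2 * ((m : ℤ) - a - 1) [ZMOD 2 * (2 * m - 1)] →
      ¬k ≡ 2 * ((m : ℤ) + a) [ZMOD 2 * (2 * m - 1)] := fun h₁ h₂ ↦ by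
    have hdvd := (h₁.symm.trans h₂).dvd
    rw [show 2 * ((m : ℤ) + a) - 2 * (m - a - 1) = 2 * (2 * a + 1) by ring] at hdvd
    exact h (Int.dvd_of_mul_dvd_mul_left two_ne_zero hdvd)
  simp only [Int.ModEq] at hplus hminus hdisjoint
  simp only [chiL, hplus, hminus]
  split_ifs with h₁ h₂
  · exact absurd h₁ (hdisjoint h₂)
  all_goals simp

end Character

theorem stmt16 (m a : ℕ) (hm : 2 ≤ m) (ha : a ≤ m - 2) (M : ℤ) (N : ℕ) (hN : 0 < N)
    (hMN : IsCoprime M (N : ℤ)) :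
    Filter.Tendsto
      (fun t : ℝ => ((2 * (m : ℂ) - 1) / 2) *
        ∑' k : ℕ, (chiL m a k : ℂ) *
          Complex.exp ((2 * Real.pi * Complex.I * M / N - t) *
            ((k : ℂ) ^ 2 / (4 * (2 * (m : ℂ) - 1)))))
      (nhdsWithin 0 (Set.Ioi 0))
      (nhds (-(1 / (8 * (2 * (m : ℂ) - 1) * (N : ℂ) ^ 2)) *
        ∑ k ∈ Finset.range ((4 * m - 2) * N + 1),
          (k : ℂ) ^ 2 * (chiL m a k : ℂ) *
            Complex.exp (2 * Real.pi * Complex.I * M * (k : ℂ) ^ 2 /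
              (4 * (2 * (m : ℂ) - 1) * N)))) := by
  have hL : 2 * (m : ℂ) - 1 = (2 * m - 1 : ℕ) := by
    rw [Nat.cast_sub (by omega), Nat.cast_mul, Nat.cast_ofNat, Nat.cast_one]
  have hdvd : ¬(2 * m - 1 : ℤ) ∣ 2 * a + 1 := fun h ↦
    absurd (Int.le_of_dvd (by omega) h) (by omega)
  rw [hL, show 4 * m - 2 = 2 * (2 * m - 1) by omega]
  exact stmt16_general (χ := fun k ↦ chiL m a k) (by omega) hN
    (Function.Odd.comp_odd Int.cast_neg (odd_chiL hdvd))
    ((periodic_chiL (by omega) a).comp Int.cast) M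
end
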